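/- Let S ≥ 1/2 be a half-integer and G = (V,E,w) a finite undirected graph with nonnegative edge weights, N = |V|. Then SDP_S(G) := max over unit vectors y_1,...,y_N ∈ ℝ^N of (1/2) Σ_{{i,j}∈E} w_ij (1 − ((S+1)/S) y_i·y_j) satisfies SDP_S(G) ≥ QMaxCut_S(G). -/

import Mathlib

open Matrix MeasureTheory Filter
open scoped BigOperators RealInnerProductSpace Kronecker

noncomputable section

/-- The spin value `S = n/2` for a half-integer spin encoded by `n : ℕ` (`n ≥ 1` means `S ≥ 1/2`). -/
def spinVal (n : ℕ) : ℝ := (n : ℝ) / 2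

/-- The raising operator `S⁺` on `ℂ^(n+1)` in the basis `|m⟩`, `m = k − n/2`, `k = 0, …, n`:
`S⁺|m⟩ = √(S(S+1) − m(m+1)) |m+1⟩`. -/
def spinP (n : ℕ) : Matrix (Fin (n+1)) (Fin (n+1)) ℂ :=
  fun j k => if (j : ℕ) = (k : ℕ) + 1
    then (Real.sqrt (spinVal n * (spinVal n + 1)
      - ((k : ℝ) - spinVal n) * (((k : ℝ) - spinVal n) + 1)) : ℂ)
    else 0

/-- The standard spin-`S` matrices `Ŝ¹, Ŝ², Ŝ³` on `ℂ^(n+1)`, where `S = n/2`: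
`Ŝ¹ = (S⁺ + S⁻)/2`, `Ŝ² = (S⁺ − S⁻)/(2i)`, `Ŝ³|m⟩ = m|m⟩`, with `S⁻ = (S⁺)ᴴ`. -/
def spinMat (n : ℕ) : Fin 3 → Matrix (Fin (n+1)) (Fin (n+1)) ℂ :=
  fun α =>
    if α = 0 then (1/2 : ℂ) • (spinP n + (spinP n)ᴴ)
    else if α = 1 then (1/(2*Complex.I) : ℂ) • (spinP n - (spinP n)ᴴ)
    else Matrix.diagonal (fun k => (((k : ℝ) - spinVal n : ℝ) : ℂ))

/-- The operator `A` acting on tensor factor `i` of `(ℂ^(n+1))^{⊗V}` and as the identity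
elsewhere, realized as a matrix indexed by configurations `V → Fin (n+1)`. -/
def siteOp {V : Type*} [Fintype V] [DecidableEq V] (n : ℕ) (i : V)
    (A : Matrix (Fin (n+1)) (Fin (n+1)) ℂ) :
    Matrix (V → Fin (n+1)) (V → Fin (n+1)) ℂ :=
  fun x y => if ∀ j, j ≠ i → x j = y j then A (x i) (y i) else 0

/-- The Heisenberg coupling `Σ_{α=1}^3 Ŝ^α_i Ŝ^α_j` between sites `i` and `j`. -/
def heis {V : Type*} [Fintype V] [DecidableEq V] (n : ℕ) (i j : V) :
    Matrix (V → Fin (n+1)) (V → Fin (n+1)) ℂ :=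
  ∑ α : Fin 3, siteOp n i (spinMat n α) * siteOp n j (spinMat n α)

/-- The largest eigenvalue of a complex matrix (as a real number). -/
def maxEig {m : Type*} [Fintype m] (A : Matrix m m ℂ) : ℝ :=
  sSup {r : ℝ | ∃ v : m → ℂ, v ≠ 0 ∧ A.mulVec v = (r : ℂ) • v}

/-- The smallest eigenvalue of a complex matrix (as a real number). -/
def minEig {m : Type*} [Fintype m] (A : Matrix m m ℂ) : ℝ :=
  sInf {r : ℝ | ∃ v : m → ℂ, v ≠ 0 ∧ A.mulVec v = (r : ℂ) • v}

/-- The spin-`S` Quantum Max-Cut Hamiltonian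
`Ĥ_QMC = (1/2) Σ_{{i,j}∈E} w_ij (𝟙 − (1/S²) Σ_α Ŝ^α_i Ŝ^α_j)`, written as a sum over
ordered pairs of vertices (each unordered edge counted twice, whence the factor `1/4`). -/
def hQMC {V : Type*} [Fintype V] [DecidableEq V] (n : ℕ) (w : V → V → ℝ) :
    Matrix (V → Fin (n+1)) (V → Fin (n+1)) ℂ :=
  (1/4 : ℂ) • ∑ i, ∑ j, (w i j : ℂ) •
    ((1 : Matrix (V → Fin (n+1)) (V → Fin (n+1)) ℂ)
      - ((1/(spinVal n)^2 : ℝ) : ℂ) • heis n i j)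

/-- The value `QMaxCut_S(G)`: the largest eigenvalue of `Ĥ_QMC`. -/
def qMaxCut {V : Type*} [Fintype V] [DecidableEq V] (n : ℕ) (w : V → V → ℝ) : ℝ :=
  maxEig (hQMC n w)

/-- The objective of the spin-`S` SDP: `(1/2) Σ_{{i,j}∈E} w_ij (1 − ((S+1)/S) y_i·y_j)` for
unit vectors `y_i ∈ ℝ^N`, `N = |V|`, written as a sum over ordered pairs of vertices. -/
def sdpObj {V : Type*} [Fintype V] (n : ℕ) (w : V → V → ℝ)
    (y : V → EuclideanSpace ℝ V) : ℝ :=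
  (1/4) * ∑ i, ∑ j, w i j * (1 - ((spinVal n + 1) / spinVal n) * ⟪y i, y j⟫)

/-- The value `SDP_S(G)`: the maximum of the SDP objective over unit vectors `y_i ∈ ℝ^N`. -/
def sdpVal {V : Type*} [Fintype V] (n : ℕ) (w : V → V → ℝ) : ℝ :=
  sSup {x : ℝ | ∃ y : V → EuclideanSpace ℝ V, (∀ i, ‖y i‖ = 1) ∧ x = sdpObj n w y}

/-!
For a unit vector `ψ`, put `u i = (Ŝ¹ᵢψ, Ŝ²ᵢψ, Ŝ³ᵢψ)`. As the spin matrices are Hermitian,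
`Re ⟪u i, u j⟫` is the expectation of the Heisenberg coupling of `i` and `j` in the state `ψ`, and
the Casimir identity `∑ α, (Ŝ^α)² = S(S+1)` gives `‖u i‖² = S(S+1)`. Dividing by `√(S(S+1))` yields
unit vectors on which the SDP objective equals the expectation of `Ĥ_QMC`, and the Gram matrix of
these `|V|` vectors is realized by vectors of `ℝ^V`. An eigenvalue is the expectation in a unit
eigenvector.
-/

section TensorPower

variable {ι : Type*} [Fintype ι] {R : Type*} [CommSemiring R] {l m p : ι → Type*}

/-- The tensor product `⨂ i, A i` of a finite family of matrices, as a matrix indexed by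
configurations. -/
def piKronecker (A : ∀ i, Matrix (l i) (m i) R) : Matrix (∀ i, l i) (∀ i, m i) R :=
  fun x y => ∏ i, A i (x i) (y i)

lemma piKronecker_mul [DecidableEq ι] [∀ i, Fintype (m i)]
    (A : ∀ i, Matrix (l i) (m i) R) (B : ∀ i, Matrix (m i) (p i) R) :
    piKronecker A * piKronecker B = piKronecker fun i => A i * B i := by
  ext x y
  simp only [piKronecker, mul_apply, ← Finset.prod_mul_distrib, Fintype.prod_sum]

lemma piKronecker_conjTranspose [StarRing R] (A : ∀ i, Matrix (l i) (m i) R) :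
    (piKronecker A)ᴴ = piKronecker fun i => (A i)ᴴ := by
  ext x y
  simp only [piKronecker, conjTranspose_apply, star_prod]

end TensorPower

section SiteOp

variable {V : Type*} [Fintype V] [DecidableEq V] {n : ℕ}

lemma siteOp_eq_piKronecker (i : V) (A : Matrix (Fin (n + 1)) (Fin (n + 1)) ℂ) :
    siteOp n i A = piKronecker (Pi.mulSingle i A) := by
  ext x y
  have hrest : ∏ j ∈ Finset.univ.erase i, (Pi.mulSingle i A : V → Matrix _ _ ℂ) j (x j) (y j) =
      if ∀ j, j ≠ i → x j = y j then 1 else 0 := by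
    rw [Finset.prod_congr rfl fun j hj => by
      rw [Pi.mulSingle_eq_of_ne (Finset.ne_of_mem_erase hj), one_apply]]
    simp only [Finset.prod_boole, Finset.mem_erase, Finset.mem_univ, and_true]
  rw [piKronecker, ← Finset.mul_prod_erase _ _ (Finset.mem_univ i), hrest, Pi.mulSingle_eq_same,
    mul_ite, mul_one, mul_zero, siteOp]

lemma siteOp_mul (i : V) (A B : Matrix (Fin (n + 1)) (Fin (n + 1)) ℂ) :
    siteOp n i A * siteOp n i B = siteOp n i (A * B) := by
  simp only [siteOp_eq_piKronecker, piKronecker_mul, Pi.mulSingle_mul]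
  rfl

lemma siteOp_commute (A : V → Matrix (Fin (n + 1)) (Fin (n + 1)) ℂ) (i j : V) :
    Commute (siteOp n i (A i)) (siteOp n j (A j)) := by
  simp only [commute_iff_eq, siteOp_eq_piKronecker, piKronecker_mul, ← Pi.mul_apply,
    (Pi.mulSingle_apply_commute A i j).eq]

lemma siteOp_conjTranspose (i : V) (A : Matrix (Fin (n + 1)) (Fin (n + 1)) ℂ) :
    (siteOp n i A)ᴴ = siteOp n i Aᴴ := by
  simp only [siteOp_eq_piKronecker, piKronecker_conjTranspose]
  exact congrArg piKronecker <| funext <|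
    Pi.apply_mulSingle (fun _ => conjTranspose) (fun _ => conjTranspose_one) i A

lemma siteOp_one (i : V) : siteOp n i 1 = 1 := by
  ext x y
  have hxy : x = y ↔ (∀ j, j ≠ i → x j = y j) ∧ x i = y i := by
    refine ⟨fun h => by simp [h], fun ⟨hne, hi⟩ => funext fun j => ?_⟩
    rcases eq_or_ne j i with rfl | hj
    exacts [hi, hne j hj]
  simp only [siteOp, one_apply, hxy, ite_and]

lemma siteOp_smul (i : V) (c : ℂ) (A : Matrix (Fin (n + 1)) (Fin (n + 1)) ℂ) :
    siteOp n i (c • A) = c • siteOp n i A := by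
  ext x y
  simp only [siteOp, Matrix.smul_apply, smul_ite, smul_zero]

lemma siteOp_sum {κ : Type*} (s : Finset κ) (i : V)
    (A : κ → Matrix (Fin (n + 1)) (Fin (n + 1)) ℂ) :
    siteOp n i (∑ k ∈ s, A k) = ∑ k ∈ s, siteOp n i (A k) := by
  ext x y
  simp only [siteOp, Matrix.sum_apply, Finset.sum_ite_irrel, Finset.sum_const_zero]

end SiteOp

section SpinMatrices

variable (n : ℕ)

lemma radicand_spinP (k : ℝ) :
    spinVal n * (spinVal n + 1) - (k - spinVal n) * ((k - spinVal n) + 1) =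
      (k + 1) * (n - k) := by
  rw [spinVal]
  ring

lemma spinP_apply (j k : Fin (n + 1)) :
    spinP n j k = if (j : ℕ) = k + 1 then (√(((k : ℝ) + 1) * (n - k)) : ℂ) else 0 := by
  rw [spinP, radicand_spinP]

lemma conjTranspose_spinP_mul_spinP : (spinP n)ᴴ * spinP n =
    diagonal fun k : Fin (n + 1) => ((((k : ℝ) + 1) * (n - k) : ℝ) : ℂ) := by
  ext a b
  simp only [mul_apply, conjTranspose_apply, spinP_apply, diagonal_apply]
  rcases eq_or_ne a b with rfl | hab
  · rw [if_pos rfl]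
    rcases (Nat.lt_succ_iff.mp a.2).lt_or_eq with ha | ha
    · have hnonneg : (0 : ℝ) ≤ (a + 1) * (n - a) := by
        have : (a : ℝ) ≤ n := by exact_mod_cast ha.le
        exact mul_nonneg (by positivity) (sub_nonneg.mpr this)
      rw [Finset.sum_eq_single (⟨a + 1, by omega⟩ : Fin (n + 1))]
      · simp only [if_true, Complex.star_def, Complex.conj_ofReal]
        rw [← Complex.ofReal_mul, Real.mul_self_sqrt hnonneg]
      · intro c _ hc
        simp only [if_neg fun h : (c : ℕ) = a + 1 => hc (Fin.ext h), mul_zero]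
      · simp only [Finset.mem_univ, not_true_eq_false, IsEmpty.forall_iff]
    · simp [ha]
  · rw [if_neg hab]
    refine Finset.sum_eq_zero fun c _ => ?_
    split_ifs with ha hb
    · exact absurd (Fin.ext (by omega)) hab
    all_goals simp only [star_zero, zero_mul, mul_zero]

lemma spinP_submatrix_rev : (spinP n).submatrix Fin.rev Fin.rev = (spinP n)ᴴ := by
  ext a b
  have ha := a.2
  have hb := b.2
  simp only [submatrix_apply, conjTranspose_apply, spinP_apply, Fin.val_rev]
  by_cases h : (b : ℕ) = a + 1
  · rw [if_pos h, if_pos (by omega), Complex.star_def, Complex.conj_ofReal]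
    congr 2
    rw [h, Nat.cast_sub (by omega)]
    push_cast
    ring
  · rw [if_neg h, if_neg (by omega), star_zero]

lemma spinP_mul_conjTranspose_spinP : spinP n * (spinP n)ᴴ =
    diagonal fun k : Fin (n + 1) => (((k : ℝ) * (n + 1 - k) : ℝ) : ℂ) := by
  have hrev : ((spinP n)ᴴ).submatrix Fin.rev Fin.rev = spinP n := by
    rw [← spinP_submatrix_rev, submatrix_submatrix, Fin.rev_involutive.comp_self, submatrix_id_id]
  calc spinP n * (spinP n)ᴴ
      = ((spinP n)ᴴ).submatrix Fin.rev Fin.rev * (spinP n).submatrix Fin.rev Fin.rev := by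
        rw [hrev, spinP_submatrix_rev]
    _ = ((spinP n)ᴴ * spinP n).submatrix Fin.rev Fin.rev := submatrix_mul_equiv _ _ _ Fin.revPerm _
    _ = diagonal fun k : Fin (n + 1) => (((k : ℝ) * (n + 1 - k) : ℝ) : ℂ) := by
        rw [conjTranspose_spinP_mul_spinP, submatrix_diagonal _ _ Fin.rev_injective]
        congr 1
        ext k
        rw [Function.comp_apply, Fin.val_rev, Nat.cast_sub (by omega)]
        push_cast
        ring

lemma isHermitian_spinMat (α : Fin 3) : (spinMat n α).IsHermitian := by
  have hneg : star (1 / (2 * Complex.I) : ℂ) = -(1 / (2 * Complex.I)) := by simp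
  fin_cases α
  · exact (isHermitian_add_transpose_self _).smul (by simp [IsSelfAdjoint])
  · change ((1 / (2 * Complex.I) : ℂ) • (spinP n - (spinP n)ᴴ))ᴴ = _
    rw [conjTranspose_smul, hneg, conjTranspose_sub, conjTranspose_conjTranspose, neg_smul,
      ← smul_neg, neg_sub]
    rfl
  · exact isHermitian_diagonal_of_self_adjoint _ (funext fun _ => Complex.conj_ofReal _)

lemma sum_spinMat_mul_self : ∑ α, spinMat n α * spinMat n α =
    ((spinVal n * (spinVal n + 1) : ℝ) : ℂ) • (1 : Matrix (Fin (n + 1)) (Fin (n + 1)) ℂ) := by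
  have hI : (1 / (2 * Complex.I) : ℂ) * (1 / (2 * Complex.I)) = -(1 / 4) := by
    field_simp
    norm_num
  have hladder : spinMat n 0 * spinMat n 0 + spinMat n 1 * spinMat n 1 =
      (1 / 2 : ℂ) • ((spinP n)ᴴ * spinP n + spinP n * (spinP n)ᴴ) := by
    simp only [spinMat, if_true, one_ne_zero, if_false, smul_mul_smul_comm, hI, mul_add, add_mul,
      mul_sub, sub_mul]
    module
  have hdiag : spinMat n 2 = diagonal fun k : Fin (n + 1) => (((k : ℝ) - spinVal n : ℝ) : ℂ) := rfl
  rw [Fin.sum_univ_three, hladder, conjTranspose_spinP_mul_spinP, spinP_mul_conjTranspose_spinP,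
    hdiag, diagonal_mul_diagonal, diagonal_add, ← diagonal_smul, diagonal_add, smul_one_eq_diagonal]
  congr 1
  ext k
  simp only [Pi.smul_apply, smul_eq_mul, spinVal]
  push_cast
  ring

end SpinMatrices

section Heisenberg

variable {V : Type*} [Fintype V] [DecidableEq V] (n : ℕ)

lemma isHermitian_siteOp_spinMat (i : V) (α : Fin 3) :
    (siteOp n i (spinMat n α)).IsHermitian := by
  rw [IsHermitian, siteOp_conjTranspose, (isHermitian_spinMat n α).eq]

lemma heis_self (i : V) :
    heis n i i = ((spinVal n * (spinVal n + 1) : ℝ) : ℂ) • 1 := by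
  simp only [heis, siteOp_mul, ← siteOp_sum, sum_spinMat_mul_self, siteOp_smul, siteOp_one]

lemma isHermitian_heis (i j : V) : (heis n i j).IsHermitian :=
  isSelfAdjoint_sum _ fun α _ =>
    ((isHermitian_siteOp_spinMat n i α).commute_iff (isHermitian_siteOp_spinMat n j α)).mp
      (siteOp_commute (fun _ => spinMat n α) i j)

lemma isHermitian_hQMC (w : V → V → ℝ) : (hQMC n w).IsHermitian := by
  have hreal (r : ℝ) : IsSelfAdjoint (r : ℂ) := Complex.conj_ofReal r
  have hterm (i j : V) : ((w i j : ℂ) • ((1 : Matrix (V → Fin (n + 1)) (V → Fin (n + 1)) ℂ)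
      - ((1 / spinVal n ^ 2 : ℝ) : ℂ) • heis n i j)).IsHermitian :=
    (isHermitian_one.sub ((isHermitian_heis n i j).smul (hreal _))).smul (hreal _)
  have hsum := isSelfAdjoint_sum Finset.univ fun i _ => isSelfAdjoint_sum Finset.univ fun j _ =>
    hterm i j
  exact IsHermitian.smul hsum (by simp [IsSelfAdjoint])

/-- The vector `(Ŝ¹ᵢψ, Ŝ²ᵢψ, Ŝ³ᵢψ)` of the three spin components at site `i` applied to the
state `ψ`. -/
def spinVec (ψ : (V → Fin (n + 1)) → ℂ) (i : V) :
    EuclideanSpace ℂ (Fin 3 × (V → Fin (n + 1))) :=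
  WithLp.toLp 2 fun p => (siteOp n i (spinMat n p.1) *ᵥ ψ) p.2

lemma inner_spinVec (ψ : (V → Fin (n + 1)) → ℂ) (i j : V) :
    ⟪spinVec n ψ i, spinVec n ψ j⟫ = (star ψ ⬝ᵥ heis n i j *ᵥ ψ).re := by
  have hterm (α : Fin 3) : star ψ ⬝ᵥ (siteOp n i (spinMat n α) * siteOp n j (spinMat n α)) *ᵥ ψ =
      star (siteOp n i (spinMat n α) *ᵥ ψ) ⬝ᵥ (siteOp n j (spinMat n α) *ᵥ ψ) := by
    rw [star_mulVec, (isHermitian_siteOp_spinMat n i α).eq, ← mulVec_mulVec, dotProduct_mulVec]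
  rw [heis, sum_mulVec, dotProduct_sum, Complex.re_sum, PiLp.inner_apply, Fintype.sum_prod_type]
  refine Finset.sum_congr rfl fun α _ => ?_
  rw [hterm, dotProduct, Complex.re_sum]
  exact Finset.sum_congr rfl fun x _ => (Complex.inner _ _).trans (by rw [mul_comm]; rfl)

variable {n} {ψ : (V → Fin (n + 1)) → ℂ}

lemma inner_spinVec_self (hψ : star ψ ⬝ᵥ ψ = 1) (i : V) :
    ⟪spinVec n ψ i, spinVec n ψ i⟫ = spinVal n * (spinVal n + 1) := by
  rw [inner_spinVec, heis_self, smul_mulVec, one_mulVec, dotProduct_smul, hψ, smul_eq_mul, mul_one,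
    Complex.ofReal_re]

lemma re_expectation_hQMC (w : V → V → ℝ) (hψ : star ψ ⬝ᵥ ψ = 1) :
    (star ψ ⬝ᵥ hQMC n w *ᵥ ψ).re =
      (1 / 4) * ∑ i, ∑ j, w i j *
        (1 - 1 / spinVal n ^ 2 * ⟪spinVec n ψ i, spinVec n ψ j⟫) := by
  have hquarter : (1 / 4 : ℂ) = ((1 / 4 : ℝ) : ℂ) := by norm_num
  simp only [hQMC, hquarter, smul_mulVec, sum_mulVec, dotProduct_smul, dotProduct_sum,
    sub_mulVec, one_mulVec, dotProduct_sub, hψ, smul_eq_mul, Complex.re_ofReal_mul, Complex.re_sum,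
    Complex.sub_re, Complex.one_re, inner_spinVec]

end Heisenberg

section Gram

open scoped MatrixOrder

variable {ι 𝕜 E : Type*} [Fintype ι] [RCLike 𝕜] [SeminormedAddCommGroup E] [InnerProductSpace 𝕜 E]

lemma exists_euclideanSpace_inner_eq (u : ι → E) :
    ∃ y : ι → EuclideanSpace 𝕜 ι, ∀ i j, inner 𝕜 (y i) (y j) = inner 𝕜 (u i) (u j) := by
  classical
  obtain ⟨B, hB⟩ := CStarAlgebra.nonneg_iff_eq_star_mul_self.mp (posSemidef_gram 𝕜 u).nonneg
  refine ⟨fun i => WithLp.toLp 2 fun k => B k i, fun i j => ?_⟩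
  rw [← gram_apply (𝕜 := 𝕜) u, hB, EuclideanSpace.inner_eq_star_dotProduct, dotProduct_comm]
  rfl

end Gram

section Optimization

variable {m : Type*} [Fintype m]

lemma maxEig_le [Nonempty m] {A : Matrix m m ℂ} (hA : A.IsHermitian) {c : ℝ}
    (hc : ∀ ψ : m → ℂ, star ψ ⬝ᵥ ψ = 1 → (star ψ ⬝ᵥ A *ᵥ ψ).re ≤ c) : maxEig A ≤ c := by
  classical
  refine csSup_le ?_ ?_
  · obtain ⟨k⟩ := ‹Nonempty m›
    refine ⟨hA.eigenvalues k, hA.eigenvectorBasis k, ?_, ?_⟩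
    · simpa using hA.eigenvectorBasis.orthonormal.ne_zero k
    · simpa using hA.mulVec_eigenvectorBasis k
  · rintro r ⟨v, hv, hAv⟩
    set φ : EuclideanSpace ℂ m := (‖WithLp.toLp 2 v‖⁻¹ : ℂ) • WithLp.toLp 2 v with hφ
    have hunit : star φ.ofLp ⬝ᵥ φ.ofLp = 1 := by
      rw [dotProduct_comm, ← EuclideanSpace.inner_eq_star_dotProduct]
      exact inner_self_eq_one_of_norm_eq_one (norm_smul_inv_norm (by simpa using hv))
    have heig : A *ᵥ φ.ofLp = (r : ℂ) • φ.ofLp := by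
      simp only [hφ, WithLp.ofLp_smul, mulVec_smul, hAv, smul_comm (r : ℂ)]
    simpa [heig, hunit] using hc φ.ofLp hunit

variable {V : Type*} [Fintype V] {n : ℕ} {w : V → V → ℝ}

lemma bddAbove_sdpObj :
    BddAbove {x : ℝ | ∃ y : V → EuclideanSpace ℝ V, (∀ i, ‖y i‖ = 1) ∧ x = sdpObj n w y} := by
  have hcont : Continuous (sdpObj n w) := by
    unfold sdpObj
    fun_prop
  have hcompact : IsCompact (Set.univ.pi fun _ : V => Metric.sphere (0 : EuclideanSpace ℝ V) 1) :=
    isCompact_univ_pi fun _ => isCompact_sphere 0 1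
  refine (hcompact.bddAbove_image hcont.continuousOn).mono ?_
  rintro _ ⟨y, hy, rfl⟩
  exact Set.mem_image_of_mem _ fun i _ => by simpa using hy i

lemma sdpObj_le_sdpVal {y : V → EuclideanSpace ℝ V} (hy : ∀ i, ‖y i‖ = 1) :
    sdpObj n w y ≤ sdpVal n w :=
  le_csSup bddAbove_sdpObj ⟨y, hy, rfl⟩

lemma re_expectation_hQMC_le_sdpVal [DecidableEq V] (hn : 1 ≤ n) {ψ : (V → Fin (n + 1)) → ℂ}
    (hψ : star ψ ⬝ᵥ ψ = 1) : (star ψ ⬝ᵥ hQMC n w *ᵥ ψ).re ≤ sdpVal n w := by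
  have hS : 0 < spinVal n := by
    rw [spinVal]
    positivity
  obtain ⟨y, hy⟩ := exists_euclideanSpace_inner_eq (𝕜 := ℝ)
    fun i => (√(spinVal n * (spinVal n + 1)))⁻¹ • spinVec n ψ i
  have hinner (i j : V) : ⟪y i, y j⟫ =
      (spinVal n * (spinVal n + 1))⁻¹ * ⟪spinVec n ψ i, spinVec n ψ j⟫ := by
    rw [hy, real_inner_smul_left, real_inner_smul_right, ← mul_assoc, ← mul_inv,
      Real.mul_self_sqrt (by positivity)]
  have hunit (i : V) : ‖y i‖ = 1 := by
    rw [← sq_eq_sq₀ (norm_nonneg _) zero_le_one, ← real_inner_self_eq_norm_sq, hinner,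
      inner_spinVec_self hψ, inv_mul_cancel₀ (by positivity), one_pow]
  have hobj : sdpObj n w y = (star ψ ⬝ᵥ hQMC n w *ᵥ ψ).re := by
    have hcoeff : (spinVal n + 1) / spinVal n * (spinVal n * (spinVal n + 1))⁻¹ =
        1 / spinVal n ^ 2 := by
      field_simp
    simp only [sdpObj, re_expectation_hQMC w hψ, hinner, ← mul_assoc, hcoeff]
  exact hobj ▸ sdpObj_le_sdpVal hunit

end Optimization

theorem sdp_is_relaxation_general {n : ℕ} (hn : 1 ≤ n) {V : Type*} [Fintype V] [DecidableEq V]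
    (w : V → V → ℝ) : qMaxCut n w ≤ sdpVal n w :=
  maxEig_le (isHermitian_hQMC n w) fun _ hψ => re_expectation_hQMC_le_sdpVal hn hψ

/-- For every half-integer `S ≥ 1/2` and every finite undirected graph `G`
with nonnegative edge weights, the spin-`S` SDP is a relaxation of `QMaxCut_S`:
`SDP_S(G) ≥ QMaxCut_S(G)`. -/
theorem sdp_is_relaxation (n : ℕ) (hn : 1 ≤ n) {V : Type*} [Fintype V] [DecidableEq V]
    (w : V → V → ℝ) (hsymm : ∀ i j, w i j = w j i) (hnn : ∀ i j, 0 ≤ w i j)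
    (hloop : ∀ i, w i i = 0) :
    qMaxCut n w ≤ sdpVal n w := by
  exact sdp_is_relaxation_general hn w

end
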